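/- Let n ≥ 3, let A be an n-by-n reciprocal matrix, let A(n) be the (n−1)-by-(n−1) principal submatrix of A obtained by deleting the last row and column, and let w = (w_1, …, w_{n−1}) be a positive vector efficient for A(n). For a positive real x, the n-vector (w_1, …, w_{n−1}, x) is efficient for A if and only if min_{1 ≤ i ≤ n−1} w_i/a_{in} ≤ x ≤ max_{1 ≤ i ≤ n−1} w_i/a_{in}. -/

import Mathlib

/-- An n-by-n positive matrix is reciprocal if `A j i = 1 / A i j` for all `i, j`. -/
def Reciprocal {n : ℕ} (A : Matrix (Fin n) (Fin n) ℝ) : Prop :=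
  (∀ i j, 0 < A i j) ∧ ∀ i j, A j i = 1 / A i j

/-- A positive vector `w` is efficient for a reciprocal matrix `A` if every positive
vector `v` with `|v i / v j - A i j| ≤ |w i / w j - A i j|` entrywise is a positive
scalar multiple of `w`. -/
def Efficient {n : ℕ} (A : Matrix (Fin n) (Fin n) ℝ) (w : Fin n → ℝ) : Prop :=
  ∀ v : Fin n → ℝ, (∀ i, 0 < v i) →
    (∀ i j, |v i / v j - A i j| ≤ |w i / w j - A i j|) →
    ∃ c : ℝ, 0 < c ∧ v = fun i => c * w i

/-!
Moving the last coordinate `x` of `(w, x)` affects only the errors of `w i / x` and `x / w i`, and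
a move towards `w i / A i n` shrinks both. If `x` lies strictly below all these ratios, or strictly
above them all, then moving it to the nearest one improves every affected entry at once, so
`(w, x)` is not efficient. Conversely, let `v` be at least as good as `(w, x)`. Efficiency of `w`
makes the first coordinates of `v` equal to `c • w`; a ratio at most `x` prevents the last
coordinate of `v` from exceeding `c * x`, and a ratio at least `x` prevents it from falling short.
-/

section Scalar

variable {𝕜 : Type*} [Field 𝕜] [LinearOrder 𝕜] [IsStrictOrderedRing 𝕜] {w a x z : 𝕜}

theorem abs_div_sub_le_of_mem_uIcc_div (hw : 0 < w) (ha : 0 < a) (hx : 0 < x)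
    (hz : z ∈ Set.uIcc x (w / a)) : |w / z - a| ≤ |w / x - a| := by
  have hanti : AntitoneOn (fun t => w / t) (Set.uIcc x (w / a)) := fun s hs t _ hst =>
    div_le_div_of_nonneg_left hw.le ((lt_min hx (div_pos hw ha)).trans_le hs.1) hst
  have hmem : w / z ∈ Set.uIcc (w / x) a := by
    simpa only [div_div_cancel₀ hw.ne'] using hanti.mapsTo_uIcc hz
  simpa only [abs_sub_comm a] using Set.abs_sub_right_of_mem_uIcc hmem

theorem abs_div_sub_one_div_le_of_mem_uIcc_div (hw : w ≠ 0) (hz : z ∈ Set.uIcc x (w / a)) :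
    |z / w - 1 / a| ≤ |x / w - 1 / a| := by
  have hscale (t : 𝕜) : |t / w - 1 / a| = |w / a - t| / |w| := by
    rw [abs_sub_comm, ← abs_div, sub_div, div_div_cancel_left' hw, one_div]
  rw [hscale, hscale]
  exact div_le_div_of_nonneg_right (Set.abs_sub_right_of_mem_uIcc hz) (abs_nonneg w)

theorem le_of_abs_div_sub_le_of_div_le (hw : 0 < w) (ha : 0 < a) (hz : 0 < z)
    (hle : w / a ≤ x) (habs : |w / z - a| ≤ |w / x - a|) : z ≤ x := by
  have hx : 0 < x := (div_pos hw ha).trans_le hle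
  have hxa : w / x ≤ a := (div_le_comm₀ ha hx).1 hle
  rw [abs_of_nonpos (sub_nonpos.2 hxa)] at habs
  have hzx : w / x ≤ w / z := by linarith [neg_le_of_abs_le habs]
  exact (div_le_div_iff_of_pos_left hw hx hz).1 hzx

theorem le_of_abs_div_sub_le_of_le_div (hw : 0 < w) (hx : 0 < x) (hz : 0 < z)
    (hle : x ≤ w / a) (habs : |w / z - a| ≤ |w / x - a|) : x ≤ z := by
  have ha : 0 < a := (div_pos_iff_of_pos_left hw).1 (hx.trans_le hle)
  have hxa : a ≤ w / x := (le_div_comm₀ hx ha).1 hle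
  rw [abs_of_nonneg (sub_nonneg.2 hxa)] at habs
  have hzx : w / z ≤ w / x := by linarith [le_of_abs_le habs]
  exact (div_le_div_iff_of_pos_left hw hz hx).1 hzx

end Scalar

section Extension

variable {n : ℕ} {A : Matrix (Fin (n + 1)) (Fin (n + 1)) ℝ} {p : Fin (n + 1)} {w : Fin n → ℝ}
  {x : ℝ}

namespace Efficient

theorem eq_of_forall_mem_uIcc [NeZero n] (hE : Efficient A (p.insertNth x w))
    (hcol : ∀ i, 0 < A (p.succAbove i) p)
    (hrow : ∀ i, A p (p.succAbove i) = 1 / A (p.succAbove i) p) (hw : ∀ i, 0 < w i) (hx : 0 < x)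
    {z : ℝ} (hz : ∀ i, z ∈ Set.uIcc x (w i / A (p.succAbove i) p)) : z = x := by
  have hzpos : 0 < z := (lt_min hx (div_pos (hw 0) (hcol 0))).trans_le (hz 0).1
  have hpos : ∀ k, 0 < (p.insertNth z w : Fin (n + 1) → ℝ) k := by
    simpa [Fin.forall_iff_succAbove p] using And.intro hzpos hw
  obtain ⟨c, -, hc⟩ := hE (p.insertNth z w) hpos <| by
    simp only [Fin.forall_iff_succAbove p, Fin.insertNth_apply_same,
      Fin.insertNth_apply_succAbove]
    refine ⟨⟨?_, fun j => ?_⟩, fun i => ⟨?_, fun j => le_rfl⟩⟩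
    · rw [div_self hzpos.ne', div_self hx.ne']
    · rw [hrow]
      exact abs_div_sub_one_div_le_of_mem_uIcc_div (hw j).ne' (hz j)
    · exact abs_div_sub_le_of_mem_uIcc_div (hw i) (hcol i) hx (hz i)
  have hc_one : c = 1 := by
    simpa [(hw 0).ne'] using congrFun hc (p.succAbove 0)
  simpa [hc_one] using congrFun hc p

theorem exists_div_le [NeZero n] (hE : Efficient A (p.insertNth x w))
    (hcol : ∀ i, 0 < A (p.succAbove i) p)
    (hrow : ∀ i, A p (p.succAbove i) = 1 / A (p.succAbove i) p) (hw : ∀ i, 0 < w i) (hx : 0 < x) :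
    ∃ i, w i / A (p.succAbove i) p ≤ x := by
  by_contra! hlt
  obtain ⟨i, hmin⟩ := Finite.exists_min fun i => w i / A (p.succAbove i) p
  exact (hlt i).ne' <| hE.eq_of_forall_mem_uIcc hcol hrow hw hx fun j =>
    Set.mem_uIcc_of_le (hlt i).le (hmin j)

theorem exists_le_div [NeZero n] (hE : Efficient A (p.insertNth x w))
    (hcol : ∀ i, 0 < A (p.succAbove i) p)
    (hrow : ∀ i, A p (p.succAbove i) = 1 / A (p.succAbove i) p) (hw : ∀ i, 0 < w i) (hx : 0 < x) :
    ∃ i, x ≤ w i / A (p.succAbove i) p := by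
  by_contra! hlt
  obtain ⟨i, hmax⟩ := Finite.exists_max fun i => w i / A (p.succAbove i) p
  exact (hlt i).ne <| hE.eq_of_forall_mem_uIcc hcol hrow hw hx fun j =>
    Set.mem_uIcc_of_ge (hmax j) (hlt i).le

theorem insertNth (hE : Efficient (A.submatrix p.succAbove p.succAbove) w)
    (hcol : ∀ i, 0 < A (p.succAbove i) p) (hw : ∀ i, 0 < w i)
    (hlower : ∃ i, w i / A (p.succAbove i) p ≤ x) (hupper : ∃ i, x ≤ w i / A (p.succAbove i) p) :
    Efficient A (p.insertNth x w) := by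
  intro v hv herr
  obtain ⟨i, hi⟩ := hlower
  obtain ⟨j, hj⟩ := hupper
  have hx : 0 < x := (div_pos (hw i) (hcol i)).trans_le hi
  obtain ⟨c, hc, hvw⟩ := hE (fun k => v (p.succAbove k)) (fun k => hv _) fun k l => by
    simpa using herr (p.succAbove k) (p.succAbove l)
  have hvc : 0 < v p / c := div_pos (hv p) hc
  have herr_col (k : Fin n) :
      |w k / (v p / c) - A (p.succAbove k) p| ≤ |w k / x - A (p.succAbove k) p| := by
    simpa [congrFun hvw k, div_div_eq_mul_div, mul_comm c] using herr (p.succAbove k) p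
  have hvx : v p / c = x :=
    (le_of_abs_div_sub_le_of_div_le (hw i) (hcol i) hvc hi (herr_col i)).antisymm
      (le_of_abs_div_sub_le_of_le_div (hw j) hx hvc hj (herr_col j))
  refine ⟨c, hc, funext <| (Fin.forall_iff_succAbove p).2 ⟨?_, fun k => ?_⟩⟩
  · simpa [mul_comm c] using (div_eq_iff hc.ne').1 hvx
  · simpa using congrFun hvw k

end Efficient

theorem stmt_6_general [NeZero n] (hcol : ∀ i, 0 < A (p.succAbove i) p)
    (hrow : ∀ i, A p (p.succAbove i) = 1 / A (p.succAbove i) p) (hw : ∀ i, 0 < w i)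
    (hE : Efficient (A.submatrix p.succAbove p.succAbove) w) (hx : 0 < x) :
    Efficient A (p.insertNth x w) ↔
      Finset.univ.inf' Finset.univ_nonempty (fun i => w i / A (p.succAbove i) p) ≤ x ∧
        x ≤ Finset.univ.sup' Finset.univ_nonempty (fun i => w i / A (p.succAbove i) p) := by
  simp only [Finset.inf'_le_iff, Finset.le_sup'_iff, Finset.mem_univ, true_and]
  exact ⟨fun h => ⟨h.exists_div_le hcol hrow hw hx, h.exists_le_div hcol hrow hw hx⟩,
    fun h => hE.insertNth hcol hw h.1 h.2⟩

end Extension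

/-- Extension theorem: for an `(n+1)`-by-`(n+1)` reciprocal matrix `A` (with `n + 1 ≥ 3`)
and a vector `w` efficient for the principal submatrix obtained by deleting the last row
and column, the extended vector `(w, x)` is efficient for `A` iff
`min_i w i / A i n ≤ x ≤ max_i w i / A i n`. -/
theorem stmt_6 {n : ℕ} (hn : 2 ≤ n) (A : Matrix (Fin (n + 1)) (Fin (n + 1)) ℝ)
    (hA : Reciprocal A) (w : Fin n → ℝ) (hw : ∀ i, 0 < w i)
    (hweff : Efficient (fun i j : Fin n => A i.castSucc j.castSucc) w)
    (x : ℝ) (hx : 0 < x) :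
    Efficient A (Fin.snoc w x) ↔
      (Finset.univ.inf' ⟨⟨0, by omega⟩, Finset.mem_univ _⟩
          (fun i : Fin n => w i / A i.castSucc (Fin.last n)) ≤ x ∧
        x ≤ Finset.univ.sup' ⟨⟨0, by omega⟩, Finset.mem_univ _⟩
          (fun i : Fin n => w i / A i.castSucc (Fin.last n))) := by
  have : NeZero n := ⟨by omega⟩
  have hsub : Efficient (A.submatrix (Fin.last n).succAbove (Fin.last n).succAbove) w := by
    simpa only [Fin.succAbove_last] using! hweff
  simpa only [Fin.insertNth_last', Fin.succAbove_last] using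
    stmt_6_general (fun _ => hA.1 _ _) (fun _ => hA.2 _ _) hw hsub hx
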